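/- For all n ≥ 2, the number of idempotents of the Jones monoid J_n of rank n − 2 is e_{n;·,n−2} = 3n − 5. -/

import Mathlib

open Relation

/-! ### The partition monoid and its planar submonoids -/

/-- Vertices of a partition diagram: `Sum.inl i` is the upper vertex `i`,
`Sum.inr i` is the lower vertex `i′`. -/
abbrev PV (n : ℕ) := Fin n ⊕ Fin n

/-- An element of the partition monoid `P_n`: a set partition of the `2n` vertices,
encoded as an equivalence relation (setoid). -/
abbrev PElt (n : ℕ) := Setoid (PV n)

/-- Three layers of vertices, used to form products. -/
abbrev TV (n : ℕ) := Fin n ⊕ (Fin n ⊕ Fin n)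

/-- Embedding of the vertices of the upper factor into the three layers. -/
def upEmb {n : ℕ} : PV n → TV n
  | .inl i => .inl i
  | .inr i => .inr (.inl i)

/-- Embedding of the vertices of the lower factor into the three layers. -/
def downEmb {n : ℕ} : PV n → TV n
  | .inl i => .inr (.inl i)
  | .inr i => .inr (.inr i)

/-- Embedding of the vertices of the product into the three layers. -/
def outEmb {n : ℕ} : PV n → TV n
  | .inl i => .inl i
  | .inr i => .inr (.inr i)

/-- The stacked graph of `a` on `b`: relations of `a` on layers 1–2 together with
relations of `b` on layers 2–3. -/
def stackRel {n : ℕ} (a b : PElt n) : TV n → TV n → Prop := fun x y =>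
  (∃ p q : PV n, a.r p q ∧ x = upEmb p ∧ y = upEmb q) ∨
  (∃ p q : PV n, b.r p q ∧ x = downEmb p ∧ y = downEmb q)

/-- The finest common coarsening (transitive closure) of the stacked graph. -/
def stackSetoid {n : ℕ} (a b : PElt n) : Setoid (TV n) :=
  EqvGen.setoid (stackRel a b)

/-- The product in the partition monoid: restrict the coarsening of the stacked graph
to the outer two layers. -/
def pmul {n : ℕ} (a b : PElt n) : PElt n :=
  Setoid.comap outEmb (stackSetoid a b)

/-- The identity of the partition monoid: blocks `{i, i′}`. -/
def pid (n : ℕ) : PElt n :=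
  ⟨fun x y => Sum.elim id id x = Sum.elim id id y,
    ⟨fun _ => rfl, fun h => h.symm, fun h₁ h₂ => h₁.trans h₂⟩⟩

/-- A vertex of the triple-layer graph lies in the identified middle row. -/
def isMiddle {n : ℕ} : TV n → Prop
  | .inr (.inl _) => True
  | _ => False

/-- `m(a,b)`: the number of floating components (components of the stacked graph of `a` on `b`
contained entirely in the identified middle row). -/
noncomputable def floatCount {n : ℕ} (a b : PElt n) : ℕ :=
  Nat.card {c : Quotient (stackSetoid a b) //
    ∀ x : TV n, Quotient.mk (stackSetoid a b) x = c → isMiddle x}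

/-- A block (equivalence class) is a transversal if it contains both an upper
and a lower vertex. -/
def IsTransClass {n : ℕ} (a : PElt n) (c : Quotient a) : Prop :=
  (∃ i : Fin n, Quotient.mk a (.inl i) = c) ∧ (∃ j : Fin n, Quotient.mk a (.inr j) = c)

/-- The rank of a partition: the number of transversal blocks. -/
noncomputable def prank {n : ℕ} (a : PElt n) : ℕ :=
  Nat.card {c : Quotient a // IsTransClass a c}

/-- Position of a vertex in the boundary order `1, …, n, n′, …, 1′` of the rectangle. -/
def ordIdx (n : ℕ) : PV n → ℕ
  | .inl i => i.val
  | .inr i => 2 * n - 1 - i.val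

/-- Planarity: the partition is non-crossing with respect to the boundary order
`1 < ⋯ < n < n′ < ⋯ < 1′`. -/
def IsPlanar {n : ℕ} (a : PElt n) : Prop :=
  ¬ ∃ w x y z : PV n, ordIdx n w < ordIdx n x ∧ ordIdx n x < ordIdx n y ∧
      ordIdx n y < ordIdx n z ∧ a.r w y ∧ a.r x z ∧ ¬ a.r w x

/-- The size of the block containing a given vertex. -/
noncomputable def blockCard {n : ℕ} (a : PElt n) (x : PV n) : ℕ :=
  Nat.card {y : PV n // a.r x y}

/-- The Motzkin monoid: planar partitions with all blocks of size at most 2. -/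
def Motzkin (n : ℕ) : Set (PElt n) :=
  {a | IsPlanar a ∧ ∀ x : PV n, blockCard a x ≤ 2}

/-- The Jones (Temperley–Lieb) monoid: planar partitions with all blocks of size
exactly 2. -/
def Jones (n : ℕ) : Set (PElt n) :=
  {a | IsPlanar a ∧ ∀ x : PV n, blockCard a x = 2}

/-! ### The interface graph -/

/-- Lower edge of the interface graph `Γ(a)`: a block `{i,j}` of `a` on upper vertices. -/
def LowEdge {n : ℕ} (a : PElt n) (i j : Fin n) : Prop :=
  i ≠ j ∧ a.r (.inl i) (.inl j)

/-- Upper edge of the interface graph `Γ(a)`: a block `{i′,j′}` of `a` on lower vertices. -/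
def UpEdge {n : ℕ} (a : PElt n) (i j : Fin n) : Prop :=
  i ≠ j ∧ a.r (.inr i) (.inr j)

/-- Vertex `i` of `Γ(a)` carries a lower edge. -/
def hasLow {n : ℕ} (a : PElt n) (i : Fin n) : Prop := ∃ j, LowEdge a i j

/-- Vertex `i` of `Γ(a)` carries an upper edge. -/
def hasUp {n : ℕ} (a : PElt n) (i : Fin n) : Prop := ∃ j, UpEdge a i j

/-- Vertex `i` is active downwards: the upper vertex `i` lies in a transversal of `a`. -/
def activeDown {n : ℕ} (a : PElt n) (i : Fin n) : Prop := ∃ j : Fin n, a.r (.inl i) (.inr j)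

/-- Vertex `i` is active upwards: the lower vertex `i′` lies in a transversal of `a`. -/
def activeUp {n : ℕ} (a : PElt n) (i : Fin n) : Prop := ∃ j : Fin n, a.r (.inr i) (.inl j)

/-- Vertex `i` is inert downwards: the upper vertex `i` is a singleton block of `a`. -/
def inertDown {n : ℕ} (a : PElt n) (i : Fin n) : Prop := ∀ y, a.r (.inl i) y → y = .inl i

/-- Vertex `i` is inert upwards: the lower vertex `i′` is a singleton block of `a`. -/
def inertUp {n : ℕ} (a : PElt n) (i : Fin n) : Prop := ∀ y, a.r (.inr i) y → y = .inr i

/-- Adjacency in the interface graph `Γ(a)`. -/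
def gedge {n : ℕ} (a : PElt n) (i j : Fin n) : Prop := LowEdge a i j ∨ UpEdge a i j

/-- Connectivity in the interface graph `Γ(a)`. -/
def gconn {n : ℕ} (a : PElt n) : Fin n → Fin n → Prop := EqvGen (gedge a)

/-- `θ` is (the vertex set of) a connected component of `Γ(a)`. -/
def IsComp {n : ℕ} (a : PElt n) (θ : Set (Fin n)) : Prop :=
  θ.Nonempty ∧ ∀ i ∈ θ, ∀ j : Fin n, (gconn a i j ↔ j ∈ θ)

/-- `θ` is a cycle component of `Γ(a)`: every vertex carries both a lower and an upper edge. -/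
def IsCycleComp {n : ℕ} (a : PElt n) (θ : Set (Fin n)) : Prop :=
  IsComp a θ ∧ ∀ i ∈ θ, hasLow a i ∧ hasUp a i

/-- `θ` is a path component of `Γ(a)`: some vertex misses an edge on some side. -/
def IsPathComp {n : ℕ} (a : PElt n) (θ : Set (Fin n)) : Prop :=
  IsComp a θ ∧ ∃ i ∈ θ, ¬ hasLow a i ∨ ¬ hasUp a i

/-- An inert path: every terminus is inert on its free side. -/
def IsInertPathComp {n : ℕ} (a : PElt n) (θ : Set (Fin n)) : Prop :=
  IsPathComp a θ ∧ ∀ i ∈ θ,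
    (¬ hasLow a i → inertDown a i) ∧ (¬ hasUp a i → inertUp a i)

/-- A trans-active path: even length (its two free ends lie on opposite sides) with
both termini active on their free sides. -/
def IsTransActivePathComp {n : ℕ} (a : PElt n) (θ : Set (Fin n)) : Prop :=
  IsPathComp a θ ∧
  (∃! i : Fin n, i ∈ θ ∧ ¬ hasLow a i) ∧ (∃! i : Fin n, i ∈ θ ∧ ¬ hasUp a i) ∧
  ∀ i ∈ θ, (¬ hasLow a i → activeDown a i) ∧ (¬ hasUp a i → activeUp a i)

/-- The number of edges of `Γ(a)` contained in `θ` (its length, for a component `θ`). -/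
noncomputable def compEdgeCount {n : ℕ} (a : PElt n) (θ : Set (Fin n)) : ℕ :=
  Nat.card {p : Fin n × Fin n // p.1 < p.2 ∧ p.1 ∈ θ ∧ p.2 ∈ θ ∧ LowEdge a p.1 p.2} +
  Nat.card {p : Fin n × Fin n // p.1 < p.2 ∧ p.1 ∈ θ ∧ p.2 ∈ θ ∧ UpEdge a p.1 p.2}

/-! ### The map `α ↦ α̂` and the sets `D`, `Θ(δ)` -/

/-- The 0-based position of `i` among the upward-active vertices. -/
noncomputable def posUp {n : ℕ} (a : PElt n) (i : Fin n) : ℕ :=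
  Nat.card {j : Fin n // j < i ∧ activeUp a j}

/-- The 0-based position of `i` among the downward-active vertices. -/
noncomputable def posDown {n : ℕ} (a : PElt n) (i : Fin n) : ℕ :=
  Nat.card {j : Fin n // j < i ∧ activeDown a j}

/-- `i` and `j` are consecutive upward-active vertices paired in forming `α̂`
(`i` in an even position `2t`, `j` in position `2t+1 < 2⌊r/2⌋`). -/
noncomputable def pairedUp {n : ℕ} (a : PElt n) (i j : Fin n) : Prop :=
  activeUp a i ∧ activeUp a j ∧ Even (posUp a i) ∧ posUp a j = posUp a i + 1 ∧
    posUp a j < 2 * (prank a / 2)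

/-- `i` and `j` are consecutive downward-active vertices paired in forming `α̂`. -/
noncomputable def pairedDown {n : ℕ} (a : PElt n) (i j : Fin n) : Prop :=
  activeDown a i ∧ activeDown a j ∧ Even (posDown a i) ∧ posDown a j = posDown a i + 1 ∧
    posDown a j < 2 * (prank a / 2)

/-- The transversal relations removed in forming `α̂` (those of the first `2⌊r/2⌋`
transversals). -/
noncomputable def removedTrans {n : ℕ} (a : PElt n) (x y : PV n) : Prop :=
  ∃ i j : Fin n, a.r (.inl i) (.inr j) ∧ posDown a i < 2 * (prank a / 2) ∧
    ((x = .inl i ∧ y = .inr j) ∨ (x = .inr j ∧ y = .inl i))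

/-- The generating relation of `α̂`: the relations of `α` minus the removed transversals,
plus the new blocks pairing consecutive active vertices. -/
noncomputable def hatRel {n : ℕ} (a : PElt n) (x y : PV n) : Prop :=
  (a.r x y ∧ ¬ removedTrans a x y) ∨
  (∃ i j : Fin n, pairedUp a i j ∧
      ((x = .inr i ∧ y = .inr j) ∨ (x = .inr j ∧ y = .inr i))) ∨
  (∃ i j : Fin n, pairedDown a i j ∧
      ((x = .inl i ∧ y = .inl j) ∨ (x = .inl j ∧ y = .inl i)))

/-- The element `α̂` obtained from `α` by pairing off consecutive active vertices. -/
noncomputable def hat {n : ℕ} (a : PElt n) : PElt n := EqvGen.setoid (hatRel a)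

/-- The idempotents of a subset `S` (with respect to the partition product). -/
def Eset {n : ℕ} (S : Set (PElt n)) : Set (PElt n) := {a ∈ S | pmul a a = a}

/-- `D(S) = D₀ ∪ E(D₁)`: the idempotents of `S` of rank at most 1. -/
def Dset {n : ℕ} (S : Set (PElt n)) : Set (PElt n) :=
  {d ∈ S | pmul d d = d ∧ prank d ≤ 1}

/-- `θ` lies (entirely) to the left of the leftmost transversal of `a`. -/
def LeftOfTrans {n : ℕ} (a : PElt n) (θ : Set (Fin n)) : Prop :=
  ∀ i ∈ θ, ∀ j : Fin n, activeDown a j ∨ activeUp a j → i < j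

/-- `Θ(a)`: the cycle components of `Γ(a)` lying entirely to the left of the leftmost
transversal. -/
def ThetaSet {n : ℕ} (a : PElt n) : Set (Set (Fin n)) :=
  {θ | IsCycleComp a θ ∧ LeftOfTrans a θ}

/-! ### Returns, special pairs and `θ`-covers -/

/-- The block `{i,j}` of `a` on upper vertices is an upper return: no upper block
`{k,l}` has `k<i<j<l`, and no transversal contains an upper vertex smaller than `i`. -/
def UpperReturn {n : ℕ} (a : PElt n) (i j : Fin n) : Prop :=
  i < j ∧ a.r (.inl i) (.inl j) ∧
  (¬ ∃ k l : Fin n, k < i ∧ j < l ∧ a.r (.inl k) (.inl l)) ∧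
  (¬ ∃ k : Fin n, k < i ∧ activeDown a k)

/-- The block `{i′,j′}` of `a` on lower vertices is a lower return. -/
def LowerReturn {n : ℕ} (a : PElt n) (i j : Fin n) : Prop :=
  i < j ∧ a.r (.inr i) (.inr j) ∧
  (¬ ∃ k l : Fin n, k < i ∧ j < l ∧ a.r (.inr k) (.inr l)) ∧
  (¬ ∃ k : Fin n, k < i ∧ activeUp a k)

/-- The interface-graph adjacency of `a` after deleting the lower-vertex block `{i′,j′}`
and the upper-vertex block `{k,l}`. -/
def redEdge {n : ℕ} (a : PElt n) (i j k l : Fin n) (u v : Fin n) : Prop :=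
  (LowEdge a u v ∧ ({u, v} : Set (Fin n)) ≠ {k, l}) ∨
  (UpEdge a u v ∧ ({u, v} : Set (Fin n)) ≠ {i, j})

/-- The relation generating the `θ`-cover `a − (e′,f)`, for `e′ = {i′,j′}` and
`f = {k,l}`: delete the two blocks, and join each freed upper vertex to the freed lower
vertex reached along its path. -/
def coverRel {n : ℕ} (a : PElt n) (i j k l : Fin n) (x y : PV n) : Prop :=
  (a.r x y ∧ ({x, y} : Set (PV n)) ≠ {.inl k, .inl l} ∧
    ({x, y} : Set (PV n)) ≠ {.inr i, .inr j}) ∨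
  (∃ u v : Fin n, u ∈ ({k, l} : Set (Fin n)) ∧ v ∈ ({i, j} : Set (Fin n)) ∧
    EqvGen (redEdge a i j k l) u v ∧
    ((x = .inl u ∧ y = .inr v) ∨ (x = .inr v ∧ y = .inl u)))

/-- The `θ`-cover `a − (e′,f)` as a partition. -/
def coverElt {n : ℕ} (a : PElt n) (i j k l : Fin n) : PElt n :=
  EqvGen.setoid (coverRel a i j k l)

/-- `b` is a `θ`-cover of `a`: `θ ∈ Θ(a)` and `b = a − (e′,f)` for some special pair
`(e′,f)` over `θ` (one lower-return and one upper-return edge of `θ`). -/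
def IsThetaCover {n : ℕ} (a : PElt n) (θ : Set (Fin n)) (b : PElt n) : Prop :=
  θ ∈ ThetaSet a ∧
  ∃ i j k l : Fin n, i ∈ θ ∧ j ∈ θ ∧ k ∈ θ ∧ l ∈ θ ∧
    LowerReturn a i j ∧ UpperReturn a k l ∧ b = coverElt a i j k l

/-- `a ≪_d b`: `a = b` or there is a chain of `θ`-covers from `a` to `b` along pairwise
distinct cycles `θ ∈ Θ(d)`. -/
def llRel {n : ℕ} (d : PElt n) (a b : PElt n) : Prop :=
  a = b ∨ ∃ (h : ℕ) (θs : Fin h → Set (Fin n)) (as : Fin (h + 1) → PElt n),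
    Function.Injective θs ∧ (∀ ι, θs ι ∈ ThetaSet d) ∧
    as 0 = a ∧ as (Fin.last h) = b ∧
    ∀ ι : Fin h, IsThetaCover (as ι.castSucc) (θs ι) (as ι.succ)

/-- The fibre `F_d = {α ∈ E(S) : α̂ = d}`. -/
def Fib {n : ℕ} (S : Set (PElt n)) (d : PElt n) : Set (PElt n) :=
  {a ∈ Eset S | hat a = d}

/-- `C_d(θ) = C*_d(θ) ∪ {d}`, where `C*_d(θ)` is the set of `θ`-covers of `d`. -/
def CoverSet {n : ℕ} (d : PElt n) (θ : Set (Fin n)) : Set (PElt n) :=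
  insert d {b | IsThetaCover d θ b}

/-- `u_θ`: the number of upper-return blocks among the edges of `θ`. -/
noncomputable def uRet {n : ℕ} (a : PElt n) (θ : Set (Fin n)) : ℕ :=
  Nat.card {p : Fin n × Fin n // p.1 ∈ θ ∧ p.2 ∈ θ ∧ UpperReturn a p.1 p.2}

/-- `l_θ`: the number of lower-return blocks among the edges of `θ`. -/
noncomputable def lRet {n : ℕ} (a : PElt n) (θ : Set (Fin n)) : ℕ :=
  Nat.card {p : Fin n × Fin n // p.1 ∈ θ ∧ p.2 ∈ θ ∧ LowerReturn a p.1 p.2}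

/-! ### Twisted semigroup algebras -/

variable {K : Type} [Field K]

/-- The underlying vector space of the semigroup algebra `k[P_n]`. -/
abbrev PAlg (n : ℕ) (K : Type) [Field K] := PElt n →₀ K

/-- The twisted multiplication on `k[P_n]`: on basis elements,
`a ∘ b = ξ^{m(a,b)} · (ab)`, extended bilinearly. -/
noncomputable def twistMul {n : ℕ} (ξ : K) (f g : PAlg n K) : PAlg n K :=
  f.sum fun a ca => g.sum fun b cb =>
    Finsupp.single (pmul a b) (ca * cb * ξ ^ floatCount a b)

/-- The twisted variant `S^ξ`: the subsemigroup of `(k[S], ∘)` generated by (the basis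
elements corresponding to) `S`. -/
def TwistedVariant {n : ℕ} (ξ : K) (S : Set (PElt n)) : Set (PAlg n K) :=
  ⋂₀ {T : Set (PAlg n K) | (∀ a ∈ S, Finsupp.single a (1 : K) ∈ T) ∧
      ∀ f ∈ T, ∀ g ∈ T, twistMul ξ f g ∈ T}

/-- The idempotents of a set of elements of the twisted algebra. -/
def EsetTwist {n : ℕ} (ξ : K) (X : Set (PAlg n K)) : Set (PAlg n K) :=
  {f ∈ X | twistMul ξ f f = f}

/-- `⟨S^ξ, ξ·1⟩ = {ξ^i·α : i ∈ ℕ, α ∈ S}`. -/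
def TwistNat {n : ℕ} (ξ : K) (S : Set (PElt n)) : Set (PAlg n K) :=
  {f | ∃ (i : ℕ), ∃ a ∈ S, f = Finsupp.single a (ξ ^ i)}

/-- `⟨S^ξ, ξ·1, ξ⁻¹·1⟩ = {ξ^i·α : i ∈ ℤ, α ∈ S}`. -/
def TwistInt {n : ℕ} (ξ : K) (S : Set (PElt n)) : Set (PAlg n K) :=
  {f | ∃ (i : ℤ), ∃ a ∈ S, f = Finsupp.single a (ξ ^ i)}

/-! ### Idempotent statistics of the Jones monoid -/

/-- The number of cycle components of `Γ(a)`. -/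
noncomputable def numCycles {n : ℕ} (a : PElt n) : ℕ :=
  Nat.card {θ : Set (Fin n) // IsCycleComp a θ}

/-- The number of path components of `Γ(a)`. -/
noncomputable def numPaths {n : ℕ} (a : PElt n) : ℕ :=
  Nat.card {θ : Set (Fin n) // IsPathComp a θ}

/-- `E_{n;c,p}`: the idempotents of the Jones monoid `J_n` with `c` cycle components and
`p` path components (out-of-range indices give the empty set). -/
def EJcp (n : ℕ) (c p : ℤ) : Set (PElt n) :=
  {a ∈ Jones n | pmul a a = a ∧ (numCycles a : ℤ) = c ∧ (numPaths a : ℤ) = p}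

/-- `e_{n;c,p} = |E_{n;c,p}|`. -/
noncomputable def eJ (n : ℕ) (c p : ℤ) : ℕ := Nat.card (EJcp n c p)

/-- `e_{n;·,p} = Σ_c e_{n;c,p}`: the number of idempotents of `J_n` of rank `p`. -/
noncomputable def eJdot (n : ℕ) (p : ℤ) : ℕ :=
  Nat.card {a : PElt n | a ∈ Jones n ∧ pmul a a = a ∧ (numPaths a : ℤ) = p}

/-- `S^{(1)}_{n;c,p} = Σ_{α ∈ E_{n;c,p}} Σ_{θ ∈ Θ(α)} (u_θ + l_θ)`. -/
noncomputable def S1 (n : ℕ) (c p : ℤ) : ℕ :=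
  ∑ᶠ a ∈ EJcp n c p, ∑ᶠ θ ∈ ThetaSet a, (uRet a θ + lRet a θ)

/-- `S^{(2)}_{n;c,p} = Σ_{α ∈ E_{n;c,p}} Σ_{θ₁ ≠ θ₂ ∈ Θ(α)} u_{θ₁}·l_{θ₂}`
(the inner sum over ordered pairs of distinct cycles). -/
noncomputable def S2 (n : ℕ) (c p : ℤ) : ℕ :=
  ∑ᶠ a ∈ EJcp n c p, ∑ᶠ q ∈ {q : Set (Fin n) × Set (Fin n) |
      q.1 ∈ ThetaSet a ∧ q.2 ∈ ThetaSet a ∧ q.1 ≠ q.2}, uRet a q.1 * lRet a q.2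

/-- `S^{(1)}_{n;·,p}`. -/
noncomputable def S1dot (n : ℕ) (p : ℤ) : ℕ :=
  ∑ᶠ a ∈ {a : PElt n | a ∈ Jones n ∧ pmul a a = a ∧ (numPaths a : ℤ) = p},
    ∑ᶠ θ ∈ ThetaSet a, (uRet a θ + lRet a θ)

/-- `S^{(2)}_{n;·,p}`. -/
noncomputable def S2dot (n : ℕ) (p : ℤ) : ℕ :=
  ∑ᶠ a ∈ {a : PElt n | a ∈ Jones n ∧ pmul a a = a ∧ (numPaths a : ℤ) = p},
    ∑ᶠ q ∈ {q : Set (Fin n) × Set (Fin n) |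
      q.1 ∈ ThetaSet a ∧ q.2 ∈ ThetaSet a ∧ q.1 ≠ q.2}, uRet a q.1 * lRet a q.2

/-!
The proof rests on two facts. First, `α ∈ P_n` is idempotent if and only if, for each transversal
joining `u` to `v′`, the downward-active vertices in the component of `v` in `Γ(α)` are exactly
those in the block of `u`; hence the path components of an idempotent of `J_n` correspond to its
transversals. Secondly, an element of `J_n` is determined by its interface graph, since planarity
forces the transversals to be joined in order. So an element of `J_n` of rank `n − 2` is determined
by its single upper block `{i, i+1}` and its single lower block `{k′, (k+1)′}`, and the criterion
shows that it is idempotent if and only if `|i − k| ≤ 1`.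
-/

section Idempotents

variable {n : ℕ} {a b : PElt n}

theorem stackRel_symm {x y : TV n} : stackRel a b x y → stackRel a b y x
  | .inl ⟨p, q, h, hx, hy⟩ => .inl ⟨q, p, a.symm' h, hy, hx⟩
  | .inr ⟨p, q, h, hx, hy⟩ => .inr ⟨q, p, b.symm' h, hy, hx⟩

theorem mem_iff_of_stackSetoid {S : Set (TV n)} (hS : ∀ x y, stackRel a b x y → x ∈ S → y ∈ S)
    {x y : TV n} (h : (stackSetoid a b).r x y) : x ∈ S ↔ y ∈ S := by
  change EqvGen _ x y at h
  induction h with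
  | rel x y h => exact ⟨hS x y h, hS y x (stackRel_symm h)⟩
  | refl x => rfl
  | symm x y _ ih => exact ih.symm
  | trans x y z _ _ hxy hyz => exact hxy.trans hyz

theorem stackSetoid_upEmb {p q : PV n} (h : a.r p q) : (stackSetoid a b).r (upEmb p) (upEmb q) :=
  EqvGen.rel _ _ (.inl ⟨p, q, h, rfl, rfl⟩)

theorem stackSetoid_downEmb {p q : PV n} (h : b.r p q) :
    (stackSetoid a b).r (downEmb p) (downEmb q) :=
  EqvGen.rel _ _ (.inr ⟨p, q, h, rfl, rfl⟩)

theorem gconn_of_rel {u v : Fin n} (h : a.r (.inl u) (.inl v) ∨ a.r (.inr u) (.inr v)) :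
    gconn a u v := by
  rcases eq_or_ne u v with rfl | huv
  · exact EqvGen.refl u
  · exact EqvGen.rel _ _ (h.imp (⟨huv, ·⟩) (⟨huv, ·⟩))

theorem eq_of_gconn {β : Type*} {f : Fin n → β} (hf : ∀ u v, gedge a u v → f u = f v)
    {u v : Fin n} (h : gconn a u v) : f u = f v := by
  induction h with
  | rel u v h => exact hf u v h
  | refl u => rfl
  | symm u v _ ih => exact ih.symm
  | trans u v w _ _ huv hvw => exact huv.trans hvw

theorem stackSetoid_self_of_gconn {u v : Fin n} (h : gconn a u v) :
    (stackSetoid a a).r (.inr (.inl u)) (.inr (.inl v)) := by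
  induction h with
  | rel u v h =>
    rcases h with ⟨-, h⟩ | ⟨-, h⟩
    · exact stackSetoid_downEmb h
    · exact stackSetoid_upEmb h
  | refl u => exact Setoid.refl' _ _
  | symm u v _ ih => exact Setoid.symm' _ ih
  | trans u v w _ _ huv hvw => exact Setoid.trans' _ huv hvw

/-- The component of the middle vertex `w` in the stacked graph of `a` on itself, described
through the component of `w` in the interface graph `Γ(a)`. -/
def middleComp (a : PElt n) (w : Fin n) : Set (TV n)
  | .inl u => ∃ v, gconn a w v ∧ a.r (.inl u) (.inr v)
  | .inr (.inl v) => gconn a w v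
  | .inr (.inr y) => ∃ v, gconn a w v ∧ a.r (.inl v) (.inr y)

theorem middleComp_closed (w : Fin n) (x y : TV n) (h : stackRel a a x y)
    (hx : x ∈ middleComp a w) : y ∈ middleComp a w := by
  have gconn_of_edge {u v : Fin n} (hu : gconn a w u)
      (huv : a.r (.inl u) (.inl v) ∨ a.r (.inr u) (.inr v)) : gconn a w v :=
    EqvGen.trans _ _ _ hu (gconn_of_rel huv)
  rcases h with ⟨p | p, q | q, h, rfl, rfl⟩ | ⟨p | p, q | q, h, rfl, rfl⟩
  · obtain ⟨v, hv, hpv⟩ := hx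
    exact ⟨v, hv, a.trans' (a.symm' h) hpv⟩
  · obtain ⟨v, hv, hpv⟩ := hx
    exact gconn_of_edge hv (.inr (a.trans' (a.symm' hpv) h))
  · exact ⟨p, hx, a.symm' h⟩
  · exact gconn_of_edge hx (.inr h)
  · exact gconn_of_edge hx (.inl h)
  · exact ⟨p, hx, h⟩
  · obtain ⟨v, hv, hvp⟩ := hx
    exact gconn_of_edge hv (.inl (a.trans' hvp h))
  · obtain ⟨v, hv, hvp⟩ := hx
    exact ⟨v, hv, a.trans' hvp h⟩

/-- The combinatorial form of idempotency: for each transversal block, containing `u` and `v′` say,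
the downward-active vertices in the component of `v` in `Γ(a)` are those in the block of `u`. -/
def TransversalsClose (a : PElt n) : Prop :=
  ∀ u v w, a.r (.inl u) (.inr v) → activeDown a w → (gconn a v w ↔ a.r (.inl u) (.inl w))

theorem transversalsClose_of_pmul_self (h : pmul a a = a) : TransversalsClose a := by
  have rel_of_stack {x y : PV n} (hxy : (stackSetoid a a).r (outEmb x) (outEmb y)) : a.r x y := by
    rw [← h]
    exact hxy
  have stack_of_rel {x y : PV n} (hxy : a.r x y) : (stackSetoid a a).r (outEmb x) (outEmb y) := by
    rw [← h] at hxy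
    exact hxy
  rintro u v w huv ⟨y, hwy⟩
  constructor
  · intro hvw
    have huy : (stackSetoid a a).r (.inl u) (.inr (.inr y)) :=
      Setoid.trans' _ (stackSetoid_upEmb huv)
        (Setoid.trans' _ (stackSetoid_self_of_gconn hvw) (stackSetoid_downEmb hwy))
    exact a.trans' (rel_of_stack (x := .inl u) (y := .inr y) huy) (a.symm' hwy)
  · intro huw
    have hu : Sum.inl u ∈ middleComp a v := ⟨v, EqvGen.refl v, huv⟩
    obtain ⟨x, hvx, hxv⟩ :=
      (mem_iff_of_stackSetoid (middleComp_closed v) (stack_of_rel huv)).1 hu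
    have hxw : a.r (.inl x) (.inl w) := a.trans' hxv (a.trans' (a.symm' huv) huw)
    exact EqvGen.trans _ _ _ hvx (gconn_of_rel (.inl hxw))

theorem TransversalsClose.rel_pmul_self (h : TransversalsClose a) {x y : PV n} (hxy : a.r x y) :
    (pmul a a).r x y := by
  have transversal {u v : Fin n} (huv : a.r (.inl u) (.inr v)) :
      (pmul a a).r (.inl u) (.inr v) :=
    have hvu : gconn a v u := (h u v u huv ⟨v, huv⟩).2 (a.refl' _)
    Setoid.trans' (stackSetoid a a) (stackSetoid_upEmb huv)
      (Setoid.trans' _ (stackSetoid_self_of_gconn hvu) (stackSetoid_downEmb huv))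
  rcases x with x | x <;> rcases y with y | y
  · exact stackSetoid_upEmb hxy
  · exact transversal hxy
  · exact (pmul a a).symm' (transversal (a.symm' hxy))
  · exact stackSetoid_downEmb hxy

theorem TransversalsClose.outEmb_mem_middleComp_iff (h : TransversalsClose a) {u v : Fin n}
    (huv : a.r (.inl u) (.inr v)) (x : PV n) :
    outEmb x ∈ middleComp a v ↔ a.r (.inl u) x := by
  rcases x with w | y
  · constructor
    · rintro ⟨x, hvx, hwx⟩
      have hxw : gconn a x w := (h w x w hwx ⟨x, hwx⟩).2 (a.refl' _)
      exact (h u v w huv ⟨x, hwx⟩).1 (EqvGen.trans _ _ _ hvx hxw)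
    · intro huw
      exact ⟨v, EqvGen.refl v, a.trans' (a.symm' huw) huv⟩
  · constructor
    · rintro ⟨x, hvx, hxy⟩
      exact a.trans' ((h u v x huv ⟨y, hxy⟩).1 hvx) hxy
    · intro huy
      exact ⟨u, (h u v u huv ⟨v, huv⟩).2 (a.refl' _), huy⟩

theorem rel_of_pmul_of_not_transversal {x y : PV n} (h : (pmul a a).r x y)
    (hx : ∀ u v, a.r x (.inl u) → ¬ a.r x (.inr v)) : a.r x y := by
  have closed : ∀ s t, stackRel a a s t → s ∈ outEmb '' {z | a.r x z} →
      t ∈ outEmb '' {z | a.r x z} := by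
    rintro s t (⟨p | p, q | q, hpq, rfl, rfl⟩ | ⟨p | p, q | q, hpq, rfl, rfl⟩) ⟨z | z, hz, hzp⟩ <;>
      cases hzp
    · exact ⟨.inl q, a.trans' hz hpq, rfl⟩
    · exact absurd (a.trans' hz hpq) (hx p q hz)
    · exact absurd hz (hx q p (a.trans' hz hpq))
    · exact ⟨.inr q, a.trans' hz hpq, rfl⟩
  obtain ⟨z, hz, hzy⟩ := (mem_iff_of_stackSetoid closed h).1 ⟨x, a.refl' x, rfl⟩
  have outEmb_injective : Function.Injective (outEmb (n := n)) := by
    rintro (i | i) (j | j) hij <;> cases hij <;> rfl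
  exact outEmb_injective hzy ▸ hz

theorem TransversalsClose.rel_of_rel_pmul_self (h : TransversalsClose a) {x y : PV n}
    (hxy : (pmul a a).r x y) : a.r x y := by
  by_cases hx : ∃ u v, a.r x (.inl u) ∧ a.r x (.inr v)
  · obtain ⟨u, v, hxu, hxv⟩ := hx
    have huv : a.r (.inl u) (.inr v) := a.trans' (a.symm' hxu) hxv
    have mem_iff := h.outEmb_mem_middleComp_iff huv
    have hy := (mem_iff_of_stackSetoid (middleComp_closed v) hxy).1 ((mem_iff x).2 (a.symm' hxu))
    exact a.trans' hxu ((mem_iff y).1 hy)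
  · push Not at hx
    exact rel_of_pmul_of_not_transversal hxy hx

theorem pmul_self_eq_iff : pmul a a = a ↔ TransversalsClose a :=
  ⟨transversalsClose_of_pmul_self,
    fun h => Setoid.ext fun _ _ => ⟨h.rel_of_rel_pmul_self, h.rel_pmul_self⟩⟩

end Idempotents

section Pairings

variable {n : ℕ} {a b : PElt n}

/-- All blocks of `a` have size two: every vertex has a unique partner. -/
def IsPairing (a : PElt n) : Prop := ∀ x, ∃! y, y ≠ x ∧ a.r x y

theorem blockCard_eq_two_iff (x : PV n) : blockCard a x = 2 ↔ ∃! y, y ≠ x ∧ a.r x y := by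
  rw [blockCard, Nat.card_eq_two_iff' (⟨x, a.refl' x⟩ : {y // a.r x y})]
  constructor
  · rintro ⟨⟨y, hxy⟩, hne, huniq⟩
    exact ⟨y, ⟨fun h => hne (Subtype.ext h), hxy⟩, fun z hz =>
      congrArg Subtype.val (huniq ⟨z, hz.2⟩ fun h => hz.1 (congrArg Subtype.val h))⟩
  · rintro ⟨y, ⟨hne, hxy⟩, huniq⟩
    exact ⟨⟨y, hxy⟩, fun h => hne (congrArg Subtype.val h), fun z hz =>
      Subtype.ext (huniq z ⟨fun h => hz (Subtype.ext h), z.2⟩)⟩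

theorem mem_Jones_iff : a ∈ Jones n ↔ IsPlanar a ∧ IsPairing a := by
  simp only [Jones, IsPairing, Set.mem_ofPred_eq, blockCard_eq_two_iff]

theorem isPairing_ker {β : Type*} {f : PV n → β}
    (h : ∀ c, ∃ p q, p ≠ q ∧ ∀ x, f x = c ↔ x = p ∨ x = q) : IsPairing (Setoid.ker f) := by
  intro x
  obtain ⟨p, q, hpq, hmem⟩ := h (f x)
  have rel_iff (y : PV n) : Setoid.ker f x y ↔ y = p ∨ y = q := eq_comm.trans (hmem y)
  rcases (hmem x).1 rfl with rfl | rfl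
  · exact ⟨q, ⟨hpq.symm, (rel_iff q).2 (.inr rfl)⟩, fun y hy =>
      ((rel_iff y).1 hy.2).resolve_left hy.1⟩
  · exact ⟨p, ⟨hpq, (rel_iff p).2 (.inl rfl)⟩, fun y hy =>
      ((rel_iff y).1 hy.2).resolve_right hy.1⟩

namespace IsPairing

theorem eq_of_rel (ha : IsPairing a) {x y z : PV n} (hxy : a.r x y) (hxz : a.r x z)
    (hy : y ≠ x) (hz : z ≠ x) : y = z :=
  (ha x).unique ⟨hy, hxy⟩ ⟨hz, hxz⟩

theorem eq_of_le (ha : IsPairing a) (hb : IsPairing b) (h : ∀ x y, a.r x y → b.r x y) :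
    a = b := by
  refine Setoid.ext fun x y => ⟨h x y, fun hxy => ?_⟩
  rcases eq_or_ne y x with rfl | hyx
  · exact a.refl' y
  · obtain ⟨z, ⟨hzx, hxz⟩, -⟩ := ha x
    exact hb.eq_of_rel (h x z hxz) hxy hzx hyx ▸ hxz

theorem not_hasLow_iff (ha : IsPairing a) {u : Fin n} : ¬ hasLow a u ↔ activeDown a u := by
  constructor
  · intro hu
    obtain ⟨v | v, ⟨hvu, huv⟩, -⟩ := ha (.inl u)
    · exact absurd ⟨v, fun h => hvu (congrArg Sum.inl h.symm), huv⟩ hu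
    · exact ⟨v, huv⟩
  · rintro ⟨v, huv⟩ ⟨w, huw, hrel⟩
    exact Sum.inr_ne_inl (ha.eq_of_rel huv hrel Sum.inr_ne_inl (Sum.inl_injective.ne huw.symm))

theorem eq_of_activeDown (ha : IsPairing a) {u v : Fin n} (hu : activeDown a u)
    (huv : a.r (.inl u) (.inl v)) : u = v := by
  by_contra hne
  exact ha.not_hasLow_iff.2 hu ⟨v, hne, huv⟩

end IsPairing

/-- The reflection `α*` of `α` in the horizontal axis. -/
abbrev pstar (a : PElt n) : PElt n := Setoid.comap Sum.swap a

theorem isPairing_pstar (ha : IsPairing a) : IsPairing (pstar a) := by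
  intro x
  obtain ⟨y, ⟨hyx, hxy⟩, huniq⟩ := ha x.swap
  have hswap : (pstar a).r x y.swap := by
    change a.r x.swap y.swap.swap
    rwa [Sum.swap_swap]
  refine ⟨y.swap, ⟨fun h => hyx (by rw [← h, Sum.swap_swap]), hswap⟩, fun z hz => ?_⟩
  have hzy : z.swap = y := huniq z.swap ⟨fun h => hz.1 (Sum.swap_leftInverse.injective h), hz.2⟩
  rw [← hzy, Sum.swap_swap]

theorem ordIdx_swap_lt {x y : PV n} (h : ordIdx n x < ordIdx n y) :
    ordIdx n y.swap < ordIdx n x.swap := by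
  rcases x with x | x <;> rcases y with y | y <;> simp [ordIdx] at h ⊢ <;> omega

theorem isPlanar_pstar (ha : IsPlanar a) : IsPlanar (pstar a) := by
  rintro ⟨w, x, y, z, hwx, hxy, hyz, hwy, hxz, hnot⟩
  exact ha ⟨z.swap, y.swap, x.swap, w.swap, ordIdx_swap_lt hyz, ordIdx_swap_lt hxy,
    ordIdx_swap_lt hwx, a.symm' hxz, a.symm' hwy,
    fun hzy => hnot (a.trans' hwy (a.trans' (a.symm' hzy) (a.symm' hxz)))⟩

theorem IsPairing.not_hasUp_iff (ha : IsPairing a) {u : Fin n} : ¬ hasUp a u ↔ activeUp a u :=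
  (isPairing_pstar ha).not_hasLow_iff

theorem isPathComp_setOf_gconn {u : Fin n} (hu : ¬ hasLow a u) :
    IsPathComp a {v | gconn a u v} :=
  ⟨⟨⟨u, EqvGen.refl u⟩, fun _ hi _ => ⟨EqvGen.trans _ _ _ hi,
    EqvGen.trans _ _ _ (EqvGen.symm _ _ hi)⟩⟩, u, EqvGen.refl u, .inl hu⟩

theorem numPaths_eq_card_activeDown (ha : IsPairing a) (h : pmul a a = a) :
    numPaths a = Nat.card {u // activeDown a u} := by
  have hclose : TransversalsClose a := pmul_self_eq_iff.1 h
  let comp (u : {u // activeDown a u}) : {θ : Set (Fin n) // IsPathComp a θ} :=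
    ⟨{v | gconn a u v}, isPathComp_setOf_gconn (ha.not_hasLow_iff.2 u.2)⟩
  have comp_injective : Function.Injective comp := by
    rintro ⟨u, v, huv⟩ ⟨w, hw⟩ huw
    have hvu : gconn a v u := (hclose u v u huv ⟨v, huv⟩).2 (a.refl' _)
    have hconn : gconn a u w := (Set.ext_iff.1 (congrArg Subtype.val huw) w).2 (EqvGen.refl w)
    have hrel : a.r (.inl u) (.inl w) := (hclose u v w huv hw).1 (EqvGen.trans _ _ _ hvu hconn)
    exact Subtype.ext (ha.eq_of_activeDown ⟨v, huv⟩ hrel)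
  have comp_surjective : Function.Surjective comp := by
    rintro ⟨θ, hθ, i, hi, hend⟩
    obtain ⟨u, hu, huθ⟩ : ∃ u, activeDown a u ∧ u ∈ θ := by
      rcases hend with hlow | hup
      · exact ⟨i, ha.not_hasLow_iff.1 hlow, hi⟩
      · obtain ⟨u, hiu⟩ := ha.not_hasUp_iff.1 hup
        have hui : a.r (.inl u) (.inr i) := a.symm' hiu
        exact ⟨u, ⟨i, hui⟩, (hθ.2 i hi u).1 ((hclose u i u hui ⟨i, hui⟩).2 (a.refl' _))⟩
    exact ⟨⟨u, hu⟩, Subtype.ext (Set.ext fun v => hθ.2 u huθ v)⟩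
  exact (Nat.card_congr (Equiv.ofBijective comp ⟨comp_injective, comp_surjective⟩)).symm

end Pairings

section PlanarPairings

variable {n : ℕ} {a b : PElt n}

/-- A vertex `v` such that `v′` lies in the block of the downward-active vertex `u`; it is unique
when `a` is a pairing. -/
noncomputable def transversalEnd (u : {u // activeDown a u}) : Fin n := u.2.choose

theorem rel_transversalEnd (u : {u // activeDown a u}) :
    a.r (.inl u) (.inr (transversalEnd u)) :=
  u.2.choose_spec

theorem IsPairing.rel_iff_transversalEnd_eq (ha : IsPairing a) (u : {u // activeDown a u})
    (v : Fin n) : a.r (.inl u) (.inr v) ↔ transversalEnd u = v :=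
  ⟨fun h => Sum.inr_injective
    (ha.eq_of_rel (rel_transversalEnd u) h Sum.inr_ne_inl Sum.inr_ne_inl),
    fun h => h ▸ rel_transversalEnd u⟩

theorem IsPairing.range_transversalEnd (ha : IsPairing a) :
    Set.range (transversalEnd (a := a)) = {v | activeUp a v} := by
  ext v
  constructor
  · rintro ⟨u, rfl⟩
    exact ⟨u, a.symm' (rel_transversalEnd u)⟩
  · rintro ⟨u, hvu⟩
    have huv := a.symm' hvu
    exact ⟨⟨u, v, huv⟩, (ha.rel_iff_transversalEnd_eq ⟨u, v, huv⟩ v).1 huv⟩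

theorem IsPairing.strictMono_transversalEnd (ha : IsPairing a) (hp : IsPlanar a) :
    StrictMono (transversalEnd (a := a)) := by
  intro u w huw
  have hnot : ¬ a.r (.inl u) (.inl w) := fun h => huw.ne (Subtype.ext (ha.eq_of_activeDown u.2 h))
  rcases lt_trichotomy (transversalEnd u) (transversalEnd w) with hlt | heq | hgt
  · exact hlt
  · exact absurd (a.trans' (rel_transversalEnd u)
      (a.symm' (heq ▸ rel_transversalEnd w))) hnot
  · refine absurd ⟨.inl u, .inl w, .inr (transversalEnd u), .inr (transversalEnd w), ?_, ?_, ?_,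
      rel_transversalEnd u, rel_transversalEnd w, hnot⟩ hp <;> simp only [ordIdx] <;> omega

theorem card_activeUp_eq_card_activeDown (ha : IsPairing a) (hp : IsPlanar a) :
    Nat.card {v // activeUp a v} = Nat.card {u // activeDown a u} := by
  rw [← Nat.card_range_of_injective (ha.strictMono_transversalEnd hp).injective,
    ha.range_transversalEnd]
  rfl

theorem eq_of_lowEdge_iff_of_upEdge_iff (ha : IsPairing a) (hpa : IsPlanar a) (hb : IsPairing b)
    (hpb : IsPlanar b) (hlow : ∀ u v, LowEdge a u v ↔ LowEdge b u v)
    (hup : ∀ u v, UpEdge a u v ↔ UpEdge b u v) : a = b := by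
  have activeDown_iff (u) : activeDown a u ↔ activeDown b u := by
    simp only [← ha.not_hasLow_iff, ← hb.not_hasLow_iff, hasLow, hlow]
  have activeUp_iff (v) : activeUp a v ↔ activeUp b v := by
    simp only [← ha.not_hasUp_iff, ← hb.not_hasUp_iff, hasUp, hup]
  let e : {u // activeDown a u} ≃ {u // activeDown b u} := Equiv.subtypeEquivRight activeDown_iff
  have ends_eq : transversalEnd = transversalEnd ∘ e := by
    have he : StrictMono e := fun _ _ h => h
    refine ((ha.strictMono_transversalEnd hpa).range_inj
      ((hb.strictMono_transversalEnd hpb).comp he)).1 ?_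
    rw [e.surjective.range_comp, ha.range_transversalEnd, hb.range_transversalEnd]
    exact Set.ext activeUp_iff
  have transversal (u v : Fin n) (huv : a.r (.inl u) (.inr v)) : b.r (.inl u) (.inr v) := by
    let u' : {u // activeDown a u} := ⟨u, v, huv⟩
    refine (hb.rel_iff_transversalEnd_eq (e u') v).2 ?_
    exact (congrFun ends_eq u').symm.trans ((ha.rel_iff_transversalEnd_eq u' v).1 huv)
  refine ha.eq_of_le hb ?_
  rintro (u | u) (v | v) huv
  · rcases eq_or_ne u v with rfl | hne
    · exact b.refl' _
    · exact ((hlow u v).1 ⟨hne, huv⟩).2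
  · exact transversal u v huv
  · exact b.symm' (transversal v u (a.symm' huv))
  · rcases eq_or_ne u v with rfl | hne
    · exact b.refl' _
    · exact ((hup u v).1 ⟨hne, huv⟩).2

theorem hasLow_of_lt_of_lt (ha : IsPairing a) (hp : IsPlanar a) {u v w : Fin n}
    (huw : LowEdge a u w) (huv : u < v) (hvw : v < w) : hasLow a v := by
  by_contra hv
  obtain ⟨y, hvy⟩ := ha.not_hasLow_iff.1 hv
  refine hp ⟨.inl u, .inl v, .inl w, .inr y, huv, hvw, ?_, huw.2, hvy,
    fun h => hv ⟨u, huv.ne', a.symm' h⟩⟩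
  simp only [ordIdx]
  omega

theorem lowEdge_symm {u v : Fin n} (h : LowEdge a u v) : LowEdge a v u := ⟨h.1.symm, a.symm' h.2⟩

theorem exists_lowEdge_of_card_activeDown (ha : IsPairing a)
    (hcard : Nat.card {u // activeDown a u} + 2 = n) :
    ∃ p q, p < q ∧ LowEdge a p q ∧ ∀ u, hasLow a u ↔ u = p ∨ u = q := by
  have hactive : {u | hasLow a u}ᶜ.ncard = Nat.card {u // activeDown a u} :=
    Nat.card_congr (Equiv.subtypeEquivRight fun u => ha.not_hasLow_iff)
  have hlow : {u | hasLow a u}.ncard = 2 := by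
    have := Set.ncard_add_ncard_compl {u | hasLow a u}
    rw [Nat.card_fin] at this
    omega
  obtain ⟨p, q, hpq, hends⟩ : ∃ p q, p < q ∧ {u | hasLow a u} = {p, q} := by
    obtain ⟨p, q, hne, hends⟩ := Set.ncard_eq_two.1 hlow
    rcases hne.lt_or_gt with h | h
    · exact ⟨p, q, h, hends⟩
    · exact ⟨q, p, h, hends.trans (Set.pair_comm p q)⟩
  have hasLow_iff (u) : hasLow a u ↔ u = p ∨ u = q := Set.ext_iff.1 hends u
  obtain ⟨v, hv⟩ := (hasLow_iff p).2 (.inl rfl)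
  obtain rfl := ((hasLow_iff v).1 ⟨p, lowEdge_symm hv⟩).resolve_left hv.1.symm
  exact ⟨p, v, hpq, hv, hasLow_iff⟩

theorem exists_lowEdge_iff {m : ℕ} {a : PElt (m + 2)} (ha : IsPairing a) (hp : IsPlanar a)
    (hcard : Nat.card {u // activeDown a u} = m) :
    ∃ i : Fin (m + 1), ∀ u v, LowEdge a u v ↔ s(u, v) = s(i.castSucc, i.succ) := by
  obtain ⟨p, q, hpq, hedge, hasLow_iff⟩ := exists_lowEdge_of_card_activeDown ha (by rw [hcard])
  have hsucc : q.val = p.val + 1 := by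
    by_contra hne
    have hbetween : hasLow a ⟨p + 1, by omega⟩ :=
      hasLow_of_lt_of_lt ha hp hedge (by simp [Fin.lt_def]) (by simp only [Fin.lt_def]; omega)
    simp only [hasLow_iff, Fin.ext_iff] at hbetween
    omega
  obtain ⟨i, rfl, rfl⟩ : ∃ i : Fin (m + 1), p = i.castSucc ∧ q = i.succ :=
    ⟨⟨p, by omega⟩, rfl, Fin.ext hsucc⟩
  refine ⟨i, fun u v => ?_⟩
  rw [Sym2.eq_iff]
  constructor
  · intro huv
    have hu := (hasLow_iff u).1 ⟨v, huv⟩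
    have hv := (hasLow_iff v).1 ⟨u, lowEdge_symm huv⟩
    have hne := huv.1
    grind
  · rintro (⟨rfl, rfl⟩ | ⟨rfl, rfl⟩)
    · exact hedge
    · exact lowEdge_symm hedge

end PlanarPairings

section Hooks

variable {m : ℕ}

/-- The order embedding of `Fin m` into `Fin (m + 2)` skipping `i` and `i + 1`. -/
def skipPair (i : Fin (m + 1)) : Fin m ↪o Fin (m + 2) :=
  i.succAboveOrderEmb.trans i.castSucc.succAboveOrderEmb

theorem val_skipPair (i : Fin (m + 1)) (t : Fin m) :
    (skipPair i t).val = if t.val < i then t.val else t + 2 := by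
  simp only [skipPair, RelEmbedding.coe_trans, Function.comp_apply, Fin.succAboveOrderEmb_apply,
    Fin.succAbove, Fin.lt_def]
  grind

theorem eq_castSucc_or_eq_succ_or_eq_skipPair (i : Fin (m + 1)) (u : Fin (m + 2)) :
    u = i.castSucc ∨ u = i.succ ∨ ∃ t, u = skipPair i t := by
  rcases Fin.eq_self_or_eq_succAbove i.castSucc u with rfl | ⟨v, rfl⟩
  · exact .inl rfl
  · rcases Fin.eq_self_or_eq_succAbove i v with rfl | ⟨t, rfl⟩
    · exact .inr (.inl (Fin.succAbove_castSucc_self v))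
    · exact .inr (.inr ⟨t, rfl⟩)

theorem skipPair_ne_castSucc (i : Fin (m + 1)) (t : Fin m) : skipPair i t ≠ i.castSucc :=
  Fin.succAbove_ne _ _

theorem skipPair_ne_succ (i : Fin (m + 1)) (t : Fin m) : skipPair i t ≠ i.succ := by
  rw [← Fin.succAbove_castSucc_self]
  exact Fin.succAbove_right_injective.ne (Fin.succAbove_ne i t)

/-- The partial inverse of `skipPair i`, equal to `none` at `i` and `i + 1`. -/
noncomputable def skipLabel (i : Fin (m + 1)) : Fin (m + 2) → Option (Fin m) :=
  Function.partialInv (skipPair i)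

theorem skipLabel_eq_some_iff {i : Fin (m + 1)} {u : Fin (m + 2)} {t : Fin m} :
    skipLabel i u = some t ↔ u = skipPair i t :=
  ((skipPair i).injective.isPartialInv t u).trans eq_comm

theorem skipLabel_eq_none_iff {i : Fin (m + 1)} {u : Fin (m + 2)} :
    skipLabel i u = none ↔ u = i.castSucc ∨ u = i.succ := by
  simp only [Option.eq_none_iff_forall_ne_some, ne_eq, skipLabel_eq_some_iff]
  constructor
  · intro h
    rcases eq_castSucc_or_eq_succ_or_eq_skipPair i u with hu | hu | ⟨t, hu⟩
    · exact .inl hu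
    · exact .inr hu
    · exact absurd hu (h t)
  · rintro (rfl | rfl) t
    · exact (skipPair_ne_castSucc i t).symm
    · exact (skipPair_ne_succ i t).symm

/-- The block of `hook i k` containing a given vertex: the `t`-th transversal is `Sum.inl t`, and
the upper and lower hooks are `Sum.inr true` and `Sum.inr false`. -/
noncomputable def hookBlock (i k : Fin (m + 1)) : PV (m + 2) → Fin m ⊕ Bool
  | .inl u => (skipLabel i u).elim (.inr true) .inl
  | .inr v => (skipLabel k v).elim (.inr false) .inl

/-- The element of the Jones monoid whose only non-transversal blocks are the upper hook
`{i, i + 1}` and the lower hook `{k′, (k + 1)′}`. -/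
noncomputable abbrev hook (i k : Fin (m + 1)) : PElt (m + 2) := Setoid.ker (hookBlock i k)

/-- The two vertices of a given block of `hook i k`. -/
def hookEnds (i k : Fin (m + 1)) : Fin m ⊕ Bool → PV (m + 2) × PV (m + 2)
  | .inl t => (.inl (skipPair i t), .inr (skipPair k t))
  | .inr true => (.inl i.castSucc, .inl i.succ)
  | .inr false => (.inr k.castSucc, .inr k.succ)

variable {i k : Fin (m + 1)}

theorem hookBlock_eq_iff {x : PV (m + 2)} {c : Fin m ⊕ Bool} :
    hookBlock i k x = c ↔ x = (hookEnds i k c).1 ∨ x = (hookEnds i k c).2 := by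
  rcases x with u | u
  · rcases h : skipLabel i u with _ | s <;> rcases c with t | _ | _ <;>
      simp [hookBlock, hookEnds, h, ← skipLabel_eq_some_iff, ← skipLabel_eq_none_iff]
  · rcases h : skipLabel k u with _ | s <;> rcases c with t | _ | _ <;>
      simp [hookBlock, hookEnds, h, ← skipLabel_eq_some_iff, ← skipLabel_eq_none_iff]

theorem isPairing_hook (i k : Fin (m + 1)) : IsPairing (hook i k) := by
  refine isPairing_ker fun c => ⟨_, _, ?_, fun x => hookBlock_eq_iff⟩
  rcases c with t | _ | _ <;> simp [hookEnds, Fin.ext_iff]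

theorem hook_rel_iff {x y : PV (m + 2)} : (hook i k).r x y ↔
    x = y ∨ ∃ c, s(x, y) = s((hookEnds i k c).1, (hookEnds i k c).2) := by
  have rel_iff : (hook i k).r x y ↔ ∃ c, hookBlock i k x = c ∧ hookBlock i k y = c := by
    simp [eq_comm]
  simp only [rel_iff, hookBlock_eq_iff, Sym2.eq_iff]
  constructor
  · rintro ⟨c, rfl | rfl, rfl | rfl⟩
    · exact .inl rfl
    · exact .inr ⟨c, .inl ⟨rfl, rfl⟩⟩
    · exact .inr ⟨c, .inr ⟨rfl, rfl⟩⟩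
    · exact .inl rfl
  · rintro (rfl | ⟨c, ⟨rfl, rfl⟩ | ⟨rfl, rfl⟩⟩)
    · exact ⟨_, hookBlock_eq_iff.1 rfl, hookBlock_eq_iff.1 rfl⟩
    · exact ⟨c, .inl rfl, .inr rfl⟩
    · exact ⟨c, .inr rfl, .inl rfl⟩

theorem exists_transversal_of_hook_rel {w x y : PV (m + 2)}
    (hwx : ordIdx (m + 2) w < ordIdx (m + 2) x) (hxy : ordIdx (m + 2) x < ordIdx (m + 2) y)
    (h : (hook i k).r w y) : ∃ t, w = .inl (skipPair i t) ∧ y = .inr (skipPair k t) := by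
  obtain rfl | ⟨t | _ | _, hc⟩ := hook_rel_iff.1 h
  · omega
  all_goals
    simp only [hookEnds, Sym2.eq_iff] at hc
    obtain ⟨rfl, rfl⟩ | ⟨rfl, rfl⟩ := hc
  · exact ⟨t, rfl, rfl⟩
  all_goals
    simp only [ordIdx, Fin.val_castSucc, Fin.val_succ] at hwx hxy
    omega

theorem isPlanar_hook (i k : Fin (m + 1)) : IsPlanar (hook i k) := by
  rintro ⟨w, x, y, z, hwx, hxy, hyz, hwy, hxz, -⟩
  obtain ⟨t, rfl, rfl⟩ := exists_transversal_of_hook_rel hwx hxy hwy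
  obtain ⟨s, rfl, rfl⟩ := exists_transversal_of_hook_rel hxy hyz hxz
  have hts : t < s := (skipPair i).lt_iff_lt.1 hwx
  have hst : skipPair k t < skipPair k s := (skipPair k).lt_iff_lt.2 hts
  simp only [ordIdx, Fin.lt_def] at hyz hst
  omega

theorem lowEdge_hook_iff {u v : Fin (m + 2)} :
    LowEdge (hook i k) u v ↔ s(u, v) = s(i.castSucc, i.succ) := by
  have hedge : LowEdge (hook i k) i.castSucc i.succ :=
    ⟨Fin.castSucc_lt_succ.ne, hook_rel_iff.2 (.inr ⟨.inr true, rfl⟩)⟩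
  constructor
  · rintro ⟨hne, h⟩
    rcases hook_rel_iff.1 h with h | ⟨_ | _ | _, h⟩ <;> simp_all [hookEnds]
  · rw [Sym2.eq_iff]
    rintro (⟨rfl, rfl⟩ | ⟨rfl, rfl⟩)
    · exact hedge
    · exact lowEdge_symm hedge

theorem upEdge_hook_iff {u v : Fin (m + 2)} :
    UpEdge (hook i k) u v ↔ s(u, v) = s(k.castSucc, k.succ) := by
  have hedge : UpEdge (hook i k) k.castSucc k.succ :=
    ⟨Fin.castSucc_lt_succ.ne, hook_rel_iff.2 (.inr ⟨.inr false, rfl⟩)⟩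
  constructor
  · rintro ⟨hne, h⟩
    rcases hook_rel_iff.1 h with h | ⟨_ | _ | _, h⟩ <;> simp_all [hookEnds]
  · rw [Sym2.eq_iff]
    rintro (⟨rfl, rfl⟩ | ⟨rfl, rfl⟩)
    · exact hedge
    · exact ⟨hedge.1.symm, (hook i k).symm' hedge.2⟩

theorem hook_rel_inl_inr_iff {u v : Fin (m + 2)} :
    (hook i k).r (.inl u) (.inr v) ↔ ∃ t, u = skipPair i t ∧ v = skipPair k t := by
  rw [hook_rel_iff]
  simp [hookEnds]

theorem activeDown_hook_iff {u : Fin (m + 2)} :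
    activeDown (hook i k) u ↔ u ∈ Set.range (skipPair i) := by
  simp only [activeDown, hook_rel_inl_inr_iff, Set.mem_range]
  grind

theorem card_activeDown_hook : Nat.card {u // activeDown (hook i k) u} = m := by
  simp only [activeDown_hook_iff]
  exact (Nat.card_range_of_injective (skipPair i).injective).trans (Nat.card_fin m)

theorem gconn_hook_castSucc_succ_left : gconn (hook i k) i.castSucc i.succ :=
  EqvGen.rel _ _ (.inl (lowEdge_hook_iff.2 rfl))

theorem gconn_hook_castSucc_succ_right : gconn (hook i k) k.castSucc k.succ :=
  EqvGen.rel _ _ (.inr (upEdge_hook_iff.2 rfl))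

theorem eq_of_gconn_hook {β : Type*} {f : Fin (m + 2) → β} (hi : f i.castSucc = f i.succ)
    (hk : f k.castSucc = f k.succ) {u v : Fin (m + 2)} (h : gconn (hook i k) u v) :
    f u = f v := by
  refine eq_of_gconn (fun u v huv => ?_) h
  simp only [gedge, lowEdge_hook_iff, upEdge_hook_iff, Sym2.eq_iff] at huv
  rcases huv with (⟨rfl, rfl⟩ | ⟨rfl, rfl⟩) | (⟨rfl, rfl⟩ | ⟨rfl, rfl⟩)
  · exact hi
  · exact hi.symm
  · exact hk
  · exact hk.symm

theorem transversalsClose_hook_iff : TransversalsClose (hook i k) ↔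
    ∀ t s, gconn (hook i k) (skipPair k t) (skipPair i s) ↔ t = s := by
  have rel_iff (t s) : (hook i k).r (.inl (skipPair i t)) (.inl (skipPair i s)) ↔ t = s :=
    ⟨fun h => (skipPair i).injective
        ((isPairing_hook i k).eq_of_activeDown (activeDown_hook_iff.2 ⟨t, rfl⟩) h),
      fun h => h ▸ (hook i k).refl' _⟩
  constructor
  · intro h t s
    exact (h _ _ _ (hook_rel_inl_inr_iff.2 ⟨t, rfl, rfl⟩)
      (activeDown_hook_iff.2 ⟨s, rfl⟩)).trans (rel_iff t s)
  · rintro h u v w huv hw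
    obtain ⟨t, rfl, rfl⟩ := hook_rel_inl_inr_iff.1 huv
    obtain ⟨s, rfl⟩ := activeDown_hook_iff.1 hw
    exact (h t s).trans (rel_iff t s).symm

theorem near_of_transversalsClose_hook (h : TransversalsClose (hook i k)) :
    i.val ≤ k + 1 ∧ k.val ≤ i + 1 := by
  rw [transversalsClose_hook_iff] at h
  -- If the two edges are separated, then the left one is a component of its own, and the transversal
  -- starting or ending in it does not close up.
  constructor <;> by_contra! hlt
  · let t : Fin m := ⟨k, by omega⟩
    have hconn := eq_of_gconn_hook (f := fun u => u = k.castSucc ∨ u = k.succ)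
      (by grind) (by grind) ((h t t).2 rfl)
    grind [val_skipPair i t, val_skipPair k t]
  · let t : Fin m := ⟨i, by omega⟩
    have hconn := eq_of_gconn_hook (f := fun u => u = i.castSucc ∨ u = i.succ)
      (by grind) (by grind) ((h t t).2 rfl)
    grind [val_skipPair i t, val_skipPair k t]

theorem gconn_hook_skipPair (hik : i.val ≤ k + 1) (hki : k.val ≤ i + 1) (t : Fin m) :
    gconn (hook i k) (skipPair k t) (skipPair i t) := by
  have hi := val_skipPair i t
  have hk := val_skipPair k t
  have hleft : gconn (hook i k) i.castSucc i.succ := gconn_hook_castSucc_succ_left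
  have hright : gconn (hook i k) k.castSucc k.succ := gconn_hook_castSucc_succ_right
  rcases eq_or_ne (skipPair k t) (skipPair i t) with heq | hne
  · exact heq ▸ EqvGen.refl _
  rcases lt_or_ge t.val k with htk | htk
  · have hstart : skipPair k t = i.castSucc := by grind
    have hmid : i.succ = k.castSucc := by grind
    have hend : skipPair i t = k.succ := by grind
    rw [hstart, hend]
    exact EqvGen.trans _ _ _ (hmid ▸ hleft) hright
  · have hstart : skipPair k t = i.succ := by grind
    have hmid : i.castSucc = k.succ := by grind
    have hend : skipPair i t = k.castSucc := by grind
    rw [hstart, hend]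
    exact EqvGen.symm _ _ (EqvGen.trans _ _ _ hright (hmid ▸ hleft))

theorem transversalsClose_hook_of_near (hik : i.val ≤ k + 1) (hki : k.val ≤ i + 1) :
    TransversalsClose (hook i k) := by
  refine transversalsClose_hook_iff.2 fun t s =>
    ⟨fun h => ?_, fun h => h ▸ gconn_hook_skipPair hik hki t⟩
  -- Both edges of the interface graph lie in `{j, j + 1, j + 2}` with `j = min i k`; this map
  -- contracts these vertices to `j` and recovers `t` from either of `skipPair i t`, `skipPair k t`.
  let collapse (u : Fin (m + 2)) : ℕ := max (min u (min i k)) (u - 2)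
  have hts : collapse (skipPair k t) = collapse (skipPair i s) := by
    refine eq_of_gconn_hook ?_ ?_ h <;> simp only [collapse, Fin.val_castSucc, Fin.val_succ] <;>
      omega
  simp only [collapse, val_skipPair] at hts
  split_ifs at hts <;> omega

theorem pmul_hook_self_iff :
    pmul (hook i k) (hook i k) = hook i k ↔ i.val ≤ k + 1 ∧ k.val ≤ i + 1 :=
  pmul_self_eq_iff.trans ⟨near_of_transversalsClose_hook,
    fun h => transversalsClose_hook_of_near h.1 h.2⟩

theorem hook_injective : Function.Injective fun p : Fin (m + 1) × Fin (m + 1) => hook p.1 p.2 := by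
  rintro ⟨i, k⟩ ⟨j, l⟩ (h : hook i k = hook j l)
  have hlow : s(i.castSucc, i.succ) = s(j.castSucc, j.succ) :=
    lowEdge_hook_iff.1 (h ▸ lowEdge_hook_iff.2 rfl)
  have hup : s(k.castSucc, k.succ) = s(l.castSucc, l.succ) :=
    upEdge_hook_iff.1 (h ▸ upEdge_hook_iff.2 rfl)
  simp only [Sym2.eq_iff, Fin.ext_iff, Fin.val_castSucc, Fin.val_succ] at hlow hup
  rw [Prod.mk.injEq, Fin.ext_iff, Fin.ext_iff]
  omega

theorem exists_eq_hook {a : PElt (m + 2)} (ha : IsPairing a) (hp : IsPlanar a)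
    (hcard : Nat.card {u // activeDown a u} = m) : ∃ i k, a = hook i k := by
  obtain ⟨i, hi⟩ := exists_lowEdge_iff ha hp hcard
  obtain ⟨k, hk⟩ := exists_lowEdge_iff (isPairing_pstar ha) (isPlanar_pstar hp)
    ((card_activeUp_eq_card_activeDown ha hp).trans hcard)
  exact ⟨i, k, eq_of_lowEdge_iff_of_upEdge_iff ha hp (isPairing_hook i k) (isPlanar_hook i k)
    (fun u v => (hi u v).trans lowEdge_hook_iff.symm)
    fun u v => (hk u v).trans upEdge_hook_iff.symm⟩

end Hooks

/-- The pairs of indices at distance at most one. -/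
def nearDiagonal (m : ℕ) : Set (Fin (m + 1) × Fin (m + 1)) :=
  {p | p.1.val ≤ p.2 + 1 ∧ p.2.val ≤ p.1 + 1}

theorem card_nearDiagonal (m : ℕ) : Nat.card (nearDiagonal m) = 3 * m + 1 := by
  let enum : Fin (m + 1) ⊕ Fin m ⊕ Fin m → Fin (m + 1) × Fin (m + 1) :=
    Sum.elim (fun i => (i, i))
      (Sum.elim (fun i => (i.castSucc, i.succ)) fun i => (i.succ, i.castSucc))
  have enum_injective : Function.Injective enum := by
    rintro (i | i | i) (j | j | j) h <;> simp only [enum, Sum.elim_inl, Sum.elim_inr] at h <;> grind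
  have range_enum : Set.range enum = nearDiagonal m := by
    ext ⟨i, k⟩
    constructor
    · rintro ⟨j | j | j, h⟩ <;> cases h <;> constructor <;> grind
    · rintro ⟨hik, hki⟩
      rcases lt_trichotomy i.val k with h | h | h
      · exact ⟨.inr (.inl ⟨i, by omega⟩), Prod.ext rfl (by grind)⟩
      · exact ⟨.inl i, Prod.ext rfl (Fin.ext h)⟩
      · exact ⟨.inr (.inr ⟨k, by omega⟩), Prod.ext (by grind) rfl⟩
  rw [← range_enum, Nat.card_range_of_injective enum_injective]
  simp only [Nat.card_eq_fintype_card, Fintype.card_sum, Fintype.card_fin]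
  omega

theorem setOf_idempotent_eq_image_hook (m : ℕ) :
    {a : PElt (m + 2) | a ∈ Jones (m + 2) ∧ pmul a a = a ∧ numPaths a = m} =
      (fun p : Fin (m + 1) × Fin (m + 1) => hook p.1 p.2) '' nearDiagonal m := by
  ext a
  constructor
  · rintro ⟨hJ, hidem, hpaths⟩
    obtain ⟨hp, ha⟩ := mem_Jones_iff.1 hJ
    rw [numPaths_eq_card_activeDown ha hidem] at hpaths
    obtain ⟨i, k, rfl⟩ := exists_eq_hook ha hp hpaths
    exact ⟨(i, k), pmul_hook_self_iff.1 hidem, rfl⟩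
  · rintro ⟨⟨i, k⟩, hik, rfl⟩
    have hidem : pmul (hook i k) (hook i k) = hook i k := pmul_hook_self_iff.2 hik
    exact ⟨mem_Jones_iff.2 ⟨isPlanar_hook i k, isPairing_hook i k⟩, hidem,
      (numPaths_eq_card_activeDown (isPairing_hook i k) hidem).trans card_activeDown_hook⟩

/-- Proposition 6.4. For all `n ≥ 2`, the number of idempotents of
the Jones monoid `J_n` of rank `n − 2` is `e_{n;·,n−2} = 3n − 5`. -/
theorem jones_depth_one (n : ℕ) (hn : 2 ≤ n) :
    eJdot n ((n : ℤ) - 2) = 3 * n - 5 := by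
  obtain ⟨m, rfl⟩ := Nat.exists_eq_add_of_le' hn
  have hrank : ((m + 2 : ℕ) : ℤ) - 2 = m := by omega
  calc eJdot (m + 2) ((m + 2 : ℕ) - 2)
      = Nat.card {a | a ∈ Jones (m + 2) ∧ pmul a a = a ∧ numPaths a = m} := by
        simp only [eJdot, hrank, Nat.cast_inj]
    _ = Nat.card (nearDiagonal m) := by
        rw [setOf_idempotent_eq_image_hook, Nat.card_image_of_injective hook_injective]
    _ = 3 * (m + 2) - 5 := by
        rw [card_nearDiagonal]
        omega
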